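/- Let R be a commutative ring and B a finite étale R[[z]]-algebra. Then B₀ := B/zB is a finite étale R-algebra and there is an isomorphism of R[[z]]-algebras B ≅ B₀ ⊗_R R[[z]]. In particular, base change along R → R[[z]] induces an equivalence between finite étale R-algebras and finite étale R[[z]]-algebras. -/

import Mathlib

open scoped TensorProduct

set_option synthInstance.maxHeartbeats 1000000
set_option maxHeartbeats 1000000

universe u

/-!
Let `I` be the ideal `(z)` of `A = R[[z]]`, so that `A` is `I`-adically complete and `A / I = R`.
Then `B` and `C = A ⊗[R] B₀` are étale `A`-algebras which are `I`-adically complete, being finite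
projective modules, and they have the same reduction `B₀` modulo `I`. Infinitesimal lifting
through the powers of `I` extends the identification `B / IB ≃ C / IC` to maps `B → C` and `C → B`;
both composites reduce to the identity, hence are the identity by the uniqueness of lifts.
-/

section AdicComplete

variable {A : Type*} [CommRing A] (I : Ideal A)

theorem isAdicComplete_pi {ι : Type*} [Finite ι] (M : ι → Type*) [∀ i, AddCommGroup (M i)]
    [∀ i, Module A (M i)] [∀ i, IsAdicComplete I (M i)] : IsAdicComplete I (∀ i, M i) := by
  classical
  have := Fintype.ofFinite ι
  have h_comp : AdicCompletion.piEquivOfFintype I M ∘ AdicCompletion.of I (∀ i, M i) =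
      Pi.map fun i => AdicCompletion.of I (M i) := by
    funext x i
    rw [Function.comp_apply, AdicCompletion.piEquivOfFintype_apply]
    rfl
  rw [← AdicCompletion.of_bijective_iff,
    ← (AdicCompletion.piEquivOfFintype I M).bijective.of_comp_iff', h_comp]
  exact Function.Bijective.piMap fun i => AdicCompletion.of_bijective I (M i)

variable {M N : Type*} [AddCommGroup M] [Module A M] [AddCommGroup N] [Module A N]

theorem isAdicComplete_of_comp_eq_id [IsAdicComplete I N] {f : M →ₗ[A] N} {g : N →ₗ[A] M}
    (hgf : g ∘ₗ f = LinearMap.id) : IsAdicComplete I M := by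
  have hgf_apply : ∀ x, g (f x) = x := DFunLike.congr_fun hgf
  rw [← AdicCompletion.of_bijective_iff]
  constructor
  · intro x y hxy
    have hf : f x = f y := AdicCompletion.of_injective I N <| by
      rw [← AdicCompletion.map_of, ← AdicCompletion.map_of, hxy]
    rw [← hgf_apply x, hf, hgf_apply]
  · intro y
    obtain ⟨z, hz⟩ := AdicCompletion.of_surjective I N (AdicCompletion.map I f y)
    refine ⟨g z, ?_⟩
    rw [← AdicCompletion.map_of, hz, AdicCompletion.map_comp_apply, hgf, AdicCompletion.map_id,
      LinearMap.id_apply]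

theorem isAdicComplete_of_finite_of_projective [IsAdicComplete I A] [Module.Finite A M]
    [Module.Projective A M] : IsAdicComplete I M := by
  obtain ⟨n, g, f, -, -, hgf⟩ := Module.Finite.exists_comp_eq_id_of_projective A M
  have : IsAdicComplete I (Fin n → A) := isAdicComplete_pi I _
  exact isAdicComplete_of_comp_eq_id I hgf

end AdicComplete

section Lifting

variable {A B C : Type*} [CommRing A] [CommRing B] [CommRing C] [Algebra A B] [Algebra A C]

theorem algHom_ext_of_isHausdorff [Algebra.FormallyUnramified A B] (K : Ideal C)
    [IsHausdorff K C] {f g : B →ₐ[A] C}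
    (h : (Ideal.Quotient.mkₐ A K).comp f = (Ideal.Quotient.mkₐ A K).comp g) : f = g := by
  have h_iInf : ⨅ n, K ^ n = ⊥ := by
    simpa only [smul_eq_mul, Ideal.mul_top] using IsHausdorff.iInf_pow_smul (I := K) (M := C) ‹_›
  exact Algebra.FormallyUnramified.ext_of_iInf K h_iInf (AlgHom.congr_fun h)

theorem nonempty_algEquiv_of_quotient_algEquiv [Algebra.FormallyEtale A B]
    [Algebra.FormallyEtale A C] {J : Ideal B} {K : Ideal C} [IsAdicComplete J B]
    [IsAdicComplete K C] (e : (B ⧸ J) ≃ₐ[A] (C ⧸ K)) : Nonempty (B ≃ₐ[A] C) := by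
  let πB := Ideal.Quotient.mkₐ A J
  let πC := Ideal.Quotient.mkₐ A K
  obtain ⟨f, hf : πC.comp f = e.toAlgHom.comp πB⟩ :=
    Algebra.FormallySmooth.exists_mkₐ_comp_eq_of_isAdicComplete (e.toAlgHom.comp πB)
  obtain ⟨g, hg : πB.comp g = e.symm.toAlgHom.comp πC⟩ :=
    Algebra.FormallySmooth.exists_mkₐ_comp_eq_of_isAdicComplete (e.symm.toAlgHom.comp πC)
  have hfg : f.comp g = AlgHom.id A C := algHom_ext_of_isHausdorff K <|
    calc πC.comp (f.comp g) = e.toAlgHom.comp (πB.comp g) := by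
          rw [← AlgHom.comp_assoc, hf, AlgHom.comp_assoc]
      _ = πC.comp (AlgHom.id A C) := by rw [hg]; ext; simp
  have hgf : g.comp f = AlgHom.id A B := algHom_ext_of_isHausdorff J <|
    calc πB.comp (g.comp f) = e.symm.toAlgHom.comp (πC.comp f) := by
          rw [← AlgHom.comp_assoc, hg, AlgHom.comp_assoc]
      _ = πB.comp (AlgHom.id A B) := by rw [hf]; ext; simp
  exact ⟨AlgEquiv.ofAlgHom f g hfg hgf⟩

end Lifting

section FiniteEtale

variable {A B C : Type*} [CommRing A] [CommRing B] [CommRing C] [Algebra A B] [Algebra A C]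
  (I : Ideal A)

variable (B) in
theorem isAdicComplete_map_of_finite_of_flat_of_finitePresentation [IsAdicComplete I A]
    [Module.Finite A B] [Module.Flat A B] [Algebra.FinitePresentation A B] :
    IsAdicComplete (I.map (algebraMap A B)) B := by
  have := Module.FinitePresentation.of_finite_of_finitePresentation A B
  have : Module.Projective A B := Module.Flat.projective_of_finitePresentation
  rw [IsAdicComplete.map_algebraMap_iff]
  exact isAdicComplete_of_finite_of_projective I

theorem nonempty_algEquiv_of_quotient_map_algEquiv [IsAdicComplete I A]
    [Module.Finite A B] [Algebra.Etale A B] [Module.Finite A C] [Algebra.Etale A C]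
    (e : (B ⧸ I.map (algebraMap A B)) ≃ₐ[A] (C ⧸ I.map (algebraMap A C))) :
    Nonempty (B ≃ₐ[A] C) :=
  have := isAdicComplete_map_of_finite_of_flat_of_finitePresentation B I
  have := isAdicComplete_map_of_finite_of_flat_of_finitePresentation C I
  nonempty_algEquiv_of_quotient_algEquiv e

variable (B) in
theorem etale_quotient_map [Algebra.Etale A B] :
    Algebra.Etale (A ⧸ I) (B ⧸ I.map (algebraMap A B)) :=
  .of_equiv (Algebra.TensorProduct.quotIdealMapEquivQuotTensor B I).symm

theorem etale_of_bijective_algebraMap {R S : Type*} [CommRing R] [CommRing S] [Algebra R S]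
    (h : Function.Bijective (algebraMap R S)) : Algebra.Etale R S :=
  .of_equiv (AlgEquiv.ofBijective (Algebra.ofId R S) h)

end FiniteEtale

/-- The reduction modulo `I` of the base change along `R → A` recovers an `A / I`-algebra `S`,
through `A / I ⊗[A] (A ⊗[R] S) ≃ A / I ⊗[R] S ≃ S`: as `R` surjects onto `A / I`, tensoring over
`R` and over `A / I` agree. -/
noncomputable def quotientMapBaseChangeEquiv {R A : Type*} [CommRing R] [CommRing A]
    [Algebra R A] {I : Ideal A} (h : Function.Surjective (algebraMap R (A ⧸ I))) (S : Type*)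
    [CommRing S] [Algebra R S] [Algebra A S] [Algebra (A ⧸ I) S] [IsScalarTower A (A ⧸ I) S]
    [IsScalarTower R (A ⧸ I) S] :
    ((A ⊗[R] S) ⧸ I.map (algebraMap A (A ⊗[R] S))) ≃ₐ[A] S :=
  have : TensorProduct.CompatibleSMul R (A ⧸ I) (A ⧸ I) S := .of_algebraMap_surjective _ _ h
  let e : ((A ⊗[R] S) ⧸ I.map (algebraMap A (A ⊗[R] S))) ≃ₐ[A ⧸ I] S :=
    (Algebra.TensorProduct.quotIdealMapEquivQuotTensor (A ⊗[R] S) I).trans <|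
    (Algebra.TensorProduct.cancelBaseChange R A (A ⧸ I) (A ⧸ I) S).trans <|
    Algebra.TensorProduct.lidOfCompatibleSMul R (A ⧸ I) S
  e.restrictScalars A

theorem bijective_algebraMap_powerSeries_quotient_span_X (R : Type*) [CommRing R] :
    Function.Bijective
      (algebraMap R (PowerSeries R ⧸ Ideal.span {(PowerSeries.X : PowerSeries R)})) := by
  have mk_eq_mk_iff (f g : PowerSeries R) :
      Ideal.Quotient.mk (Ideal.span {PowerSeries.X}) f = Ideal.Quotient.mk _ g ↔
        PowerSeries.constantCoeff f = PowerSeries.constantCoeff g := by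
    rw [Ideal.Quotient.eq, Ideal.mem_span_singleton, PowerSeries.X_dvd_iff, map_sub, sub_eq_zero]
  constructor
  · intro r s hrs
    simpa using (mk_eq_mk_iff (algebraMap R _ r) (algebraMap R _ s)).1 hrs
  · intro y
    obtain ⟨f, rfl⟩ := Ideal.Quotient.mk_surjective y
    exact ⟨PowerSeries.constantCoeff f, (mk_eq_mk_iff (algebraMap R _ _) f).2 (by simp)⟩

theorem finite_etale_algebra_over_powerSeries_general {R A : Type*} [CommRing R] [CommRing A]
    [Algebra R A] (I : Ideal A) [IsAdicComplete I A]
    (h : Function.Bijective (algebraMap R (A ⧸ I))) (B : Type*) [CommRing B] [Algebra A B]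
    [Algebra R B] [IsScalarTower R A B] [Module.Finite A B] [Algebra.Etale A B] :
    Module.Finite R (B ⧸ I.map (algebraMap A B)) ∧
      Algebra.Etale R (B ⧸ I.map (algebraMap A B)) ∧
      Nonempty (B ≃ₐ[A] A ⊗[R] (B ⧸ I.map (algebraMap A B))) := by
  have : IsScalarTower R (A ⧸ I) (B ⧸ I.map (algebraMap A B)) := .to₁₃₄ R A _ _
  have : Algebra.Etale R (A ⧸ I) := etale_of_bijective_algebraMap h
  have : Algebra.Etale (A ⧸ I) (B ⧸ I.map (algebraMap A B)) := etale_quotient_map B I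
  have : Module.Finite R (A ⧸ I) := .of_surjective (Algebra.linearMap R (A ⧸ I)) h.surjective
  have : Module.Finite (A ⧸ I) (B ⧸ I.map (algebraMap A B)) := .of_restrictScalars_finite A _ _
  have finite_quotient : Module.Finite R (B ⧸ I.map (algebraMap A B)) := .trans (A ⧸ I) _
  have etale_quotient : Algebra.Etale R (B ⧸ I.map (algebraMap A B)) := .comp R (A ⧸ I) _
  exact ⟨finite_quotient, etale_quotient, nonempty_algEquiv_of_quotient_map_algEquiv I
    (quotientMapBaseChangeEquiv h.surjective _).symm⟩

/-- Let `B` be a finite étale `R[[z]]`-algebra. Then `B₀ := B/zB` is a finite étale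
`R`-algebra and `B ≅ B₀ ⊗_R R[[z]]` as `R[[z]]`-algebras. -/
theorem finite_etale_algebra_over_powerSeries (R B : Type u) [CommRing R] [CommRing B]
    [Algebra (PowerSeries R) B] [Algebra R B] [IsScalarTower R (PowerSeries R) B]
    [Module.Finite (PowerSeries R) B] [Algebra.Etale (PowerSeries R) B] :
    Module.Finite R
        (B ⧸ Ideal.span {algebraMap (PowerSeries R) B PowerSeries.X}) ∧
      Algebra.Etale R
        (B ⧸ Ideal.span {algebraMap (PowerSeries R) B PowerSeries.X}) ∧
      Nonempty (B ≃ₐ[PowerSeries R]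
        (PowerSeries R ⊗[R]
          (B ⧸ Ideal.span {algebraMap (PowerSeries R) B PowerSeries.X}))) := by
  rw [← Set.image_singleton, ← Ideal.map_span]
  exact finite_etale_algebra_over_powerSeries_general _
    (bijective_algebraMap_powerSeries_quotient_span_X R) B
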